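/- arXiv:1710.05200 — 2 statements merged into one kernel-verified Lean document; each statement's English description precedes it below -/
import Mathlib

section
/- Let A be a symmetric positive definite n×n real matrix and b ∈ ℝⁿ, and let f(x) = ½ xᵀ A x − xᵀ b, so that the gradient of f is ∇f(x) = A x − b and the residual r(x) = b − A x = −∇f(x). Suppose the sequence (x⁽ᵏ⁾)ₖ≥₁ in ℝⁿ is generated by O-ACCEL with a steepest-descent preconditioner and always takes the accelerated step; that is, for each k = 1, …, K: (i) x^P_k = x⁽ᵏ⁾ + λ_k (b − A x⁽ᵏ⁾) for some λ_k > 0; (ii) x⁽ᵏ⁺¹⁾ ∈ x^P_k + O_k(x^P_k), where O_k(x) = span{x⁽¹⁾ − x, …, x⁽ᵏ⁾ − x}; (iii) b − A x⁽ᵏ⁺¹⁾ is orthogonal to O_k(x^P_k). Assume further that b − A x⁽ᵏ⁾ ≠ 0 for all k = 1, …, K. Then for every k = 1, …, K the iterate x⁽ᵏ⁺¹⁾ is the (k+1)-st FOM iterate for the linear system A x = b with initial guess x⁽¹⁾; that is, x⁽ᵏ⁺¹⁾ ∈ x⁽¹⁾ + K_k and b − A x⁽ᵏ⁺¹⁾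 ⊥ K_k, where K_k = span{r⁽¹⁾, A r⁽¹⁾, …, A^{k−1} r⁽¹⁾} with r⁽¹⁾ = b − A x⁽¹⁾. Moreover O_k(x^P_k) = K_k for each such k. -/
/-!
Write `r_k = b - A x_k` and `D_k = span {x_1 - x_1, …, x_k - x_1} = osub x k (x 1)`. The invariant
carried by induction is `D_{k+1} = K_k` together with `r_{k+1} ⊥ K_k`.

* `O_{k+1}(x^P_{k+1})` is `D_{k+1} = K_k` enlarged by a nonzero multiple of `r_{k+1}`
  (`osub_eq_sup`). That vector lies in `K_{k+1}`, because `x_{k+1} - x_1 ∈ K_k`, and not in `K_k`,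
  because it is nonzero and orthogonal to `K_k`. Since `K_{k+1}` is generated by `K_k` and a single
  further vector, the exchange argument `sup_span_singleton_eq` gives
  `O_{k+1}(x^P_{k+1}) = K_{k+1}`. The acceleration step then yields `x_{k+2} - x_1 ∈ K_{k+1}` and
  `r_{k+2} ⊥ K_{k+1}`.
* To get `D_{k+2} = K_{k+1}` by the same exchange argument, `x_{k+2} - x_1 ∉ K_k` is needed.
  Otherwise `x_{k+2}` and `x_{k+1}` both lie in `x_1 + K_k` and have residuals orthogonal to `K_k`,
  so positive definiteness forces `x_{k+2} = x_{k+1}`. Then `r_{k+1} = r_{k+2}` lies in `K_{k+1}`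
  and is orthogonal to it, so it vanishes, contrary to assumption.
-/

open Matrix

/-- The Krylov subspace `K_k = span {r, A r, …, A^{k-1} r}`. -/
noncomputable def krylov {n : ℕ} (A : Matrix (Fin n) (Fin n) ℝ) (r : Fin n → ℝ) (k : ℕ) :
    Submodule ℝ (Fin n → ℝ) :=
  Submodule.span ℝ (Set.range fun i : Fin k => (A ^ (i : ℕ)).mulVec r)

/-- The O-ACCEL subspace `O_k(p) = span {x⁽¹⁾ - p, …, x⁽ᵏ⁾ - p}`. -/
noncomputable def osub {n : ℕ} (x : ℕ → Fin n → ℝ) (k : ℕ) (p : Fin n → ℝ) :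
    Submodule ℝ (Fin n → ℝ) :=
  Submodule.span ℝ {v | ∃ j, 1 ≤ j ∧ j ≤ k ∧ v = x j - p}

/-- Exchange: a vector of `V + ⟨w⟩` outside `V` generates `V + ⟨w⟩` over `V`. -/
lemma sup_span_singleton_eq {E : Type*} [AddCommGroup E] [Module ℝ E] {V : Submodule ℝ E}
    {v w : E} (hv : v ∈ V ⊔ Submodule.span ℝ {w}) (hvV : v ∉ V) :
    V ⊔ Submodule.span ℝ {v} = V ⊔ Submodule.span ℝ {w} := by
  apply le_antisymm
  · exact sup_le le_sup_left ((Submodule.span_singleton_le_iff_mem _ _).2 hv)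
  · refine sup_le le_sup_left ((Submodule.span_singleton_le_iff_mem _ _).2 ?_)
    obtain ⟨u, hu, z, hz, rfl⟩ := Submodule.mem_sup.1 hv
    obtain ⟨c, rfl⟩ := Submodule.mem_span_singleton.1 hz
    have hc : c ≠ 0 := by
      rintro rfl
      exact hvV (by simpa using hu)
    have hw : w = c⁻¹ • ((u + c • w) - u) := by
      rw [add_sub_cancel_left, smul_smul, inv_mul_cancel₀ hc, one_smul]
    have hmem : c⁻¹ • ((u + c • w) - u) ∈ V ⊔ Submodule.span ℝ {u + c • w} :=
      Submodule.smul_mem _ _ (Submodule.sub_mem _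
        (Submodule.mem_sup_right (Submodule.mem_span_singleton_self _))
        (Submodule.mem_sup_left hu))
    rwa [← hw] at hmem

lemma krylov_zero {n : ℕ} (A : Matrix (Fin n) (Fin n) ℝ) (r : Fin n → ℝ) :
    krylov A r 0 = ⊥ := by
  simp [krylov]

lemma pow_mulVec_mem_krylov {n : ℕ} (A : Matrix (Fin n) (Fin n) ℝ) (r : Fin n → ℝ) {i k : ℕ}
    (h : i < k) : (A ^ i).mulVec r ∈ krylov A r k :=
  Submodule.subset_span ⟨⟨i, h⟩, rfl⟩

lemma krylov_le {n : ℕ} {A : Matrix (Fin n) (Fin n) ℝ} {r : Fin n → ℝ} {k : ℕ}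
    {W : Submodule ℝ (Fin n → ℝ)} (h : ∀ i < k, (A ^ i).mulVec r ∈ W) : krylov A r k ≤ W := by
  refine Submodule.span_le.2 ?_
  rintro _ ⟨i, rfl⟩
  exact h i i.2

lemma krylov_succ {n : ℕ} (A : Matrix (Fin n) (Fin n) ℝ) (r : Fin n → ℝ) (k : ℕ) :
    krylov A r (k + 1) = krylov A r k ⊔ Submodule.span ℝ {(A ^ k).mulVec r} := by
  apply le_antisymm
  · refine krylov_le fun i hi => ?_
    rcases Nat.lt_succ_iff_lt_or_eq.1 hi with h | rfl
    · exact Submodule.mem_sup_left (pow_mulVec_mem_krylov A r h)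
    · exact Submodule.mem_sup_right (Submodule.mem_span_singleton_self _)
  · refine sup_le (krylov_le fun i hi => pow_mulVec_mem_krylov A r (by omega)) ?_
    exact (Submodule.span_singleton_le_iff_mem _ _).2 (pow_mulVec_mem_krylov A r (by omega))

lemma mulVec_mem_krylov {n : ℕ} {A : Matrix (Fin n) (Fin n) ℝ} {r v : Fin n → ℝ} {k : ℕ}
    (hv : v ∈ krylov A r k) : A.mulVec v ∈ krylov A r (k + 1) := by
  have h : krylov A r k ≤ (krylov A r (k + 1)).comap A.mulVecLin := by
    refine krylov_le fun i hi => ?_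
    rw [Submodule.mem_comap, Matrix.mulVecLin_apply, Matrix.mulVec_mulVec, ← pow_succ']
    exact pow_mulVec_mem_krylov A r (by omega)
  exact h hv

lemma sub_mem_osub {n : ℕ} (x : ℕ → Fin n → ℝ) (p : Fin n → ℝ) {j k : ℕ} (h1 : 1 ≤ j)
    (hk : j ≤ k) : x j - p ∈ osub x k p :=
  Submodule.subset_span ⟨j, h1, hk, rfl⟩

lemma osub_le {n : ℕ} {x : ℕ → Fin n → ℝ} {p : Fin n → ℝ} {k : ℕ}
    {W : Submodule ℝ (Fin n → ℝ)} (h : ∀ j, 1 ≤ j → j ≤ k → x j - p ∈ W) : osub x k p ≤ W := by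
  refine Submodule.span_le.2 ?_
  rintro _ ⟨j, h1, hk, rfl⟩
  exact h j h1 hk

lemma osub_succ {n : ℕ} (x : ℕ → Fin n → ℝ) (p : Fin n → ℝ) (k : ℕ) :
    osub x (k + 1) p = osub x k p ⊔ Submodule.span ℝ {x (k + 1) - p} := by
  apply le_antisymm
  · refine osub_le fun j h1 hj => ?_
    rcases Nat.le_succ_iff.1 hj with h | rfl
    · exact Submodule.mem_sup_left (sub_mem_osub x p h1 h)
    · exact Submodule.mem_sup_right (Submodule.mem_span_singleton_self _)
  · refine sup_le (osub_le fun j h1 hj => sub_mem_osub x p h1 (by omega)) ?_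
    exact (Submodule.span_singleton_le_iff_mem _ _).2 (sub_mem_osub x p (by omega) le_rfl)

/-- Moving the base point from `x 1` to `p` adds the single direction `x k - p`. -/
lemma osub_eq_sup {n : ℕ} (x : ℕ → Fin n → ℝ) (p : Fin n → ℝ) {k : ℕ} (hk : 1 ≤ k) :
    osub x k p = osub x k (x 1) ⊔ Submodule.span ℝ {x k - p} := by
  apply le_antisymm
  · refine osub_le fun j h1 hj => ?_
    have e : x j - p = ((x j - x 1) - (x k - x 1)) + (x k - p) := by abel
    rw [e]
    exact Submodule.add_mem_sup
      (Submodule.sub_mem _ (sub_mem_osub x _ h1 hj) (sub_mem_osub x _ hk le_rfl))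
      (Submodule.mem_span_singleton_self _)
  · refine sup_le (osub_le fun j h1 hj => ?_) ?_
    · have e : x j - x 1 = (x j - p) - (x 1 - p) := by abel
      rw [e]
      exact Submodule.sub_mem _ (sub_mem_osub x p h1 hj) (sub_mem_osub x p le_rfl hk)
    · exact (Submodule.span_singleton_le_iff_mem _ _).2 (sub_mem_osub x p hk le_rfl)

/-- Uniqueness of the Galerkin solution: two points of the same translate of `V` whose residuals
are orthogonal to `V` coincide. -/
lemma eq_of_residual_orth {n : ℕ} {A : Matrix (Fin n) (Fin n) ℝ} (hA : A.PosDef)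
    {b y z : Fin n → ℝ} {V : Submodule ℝ (Fin n → ℝ)} (hyz : y - z ∈ V)
    (hy : ∀ v ∈ V, (b - A.mulVec y) ⬝ᵥ v = 0) (hz : ∀ v ∈ V, (b - A.mulVec z) ⬝ᵥ v = 0) :
    y = z := by
  by_contra hne
  have hpos := hA.dotProduct_mulVec_pos (sub_ne_zero.2 hne)
  have e : A.mulVec (y - z) = (b - A.mulVec z) - (b - A.mulVec y) := by
    rw [Matrix.mulVec_sub]; abel
  rw [star_trivial, dotProduct_comm, e, sub_dotProduct, hy _ hyz, hz _ hyz, sub_zero] at hpos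
  exact lt_irrefl _ hpos

/-- A point of `z + K_k`, where `K_k` is generated by the residual at `z`, has its residual in
`K_{k+1}`. -/
lemma residual_mem_krylov {n : ℕ} {A : Matrix (Fin n) (Fin n) ℝ} {b y z : Fin n → ℝ} {k : ℕ}
    (h : y - z ∈ krylov A (b - A.mulVec z) k) :
    b - A.mulVec y ∈ krylov A (b - A.mulVec z) (k + 1) := by
  have e : b - A.mulVec y = (b - A.mulVec z) - A.mulVec (y - z) := by
    rw [Matrix.mulVec_sub]; abel
  have h0 : b - A.mulVec z ∈ krylov A (b - A.mulVec z) (k + 1) := by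
    simpa using pow_mulVec_mem_krylov A (b - A.mulVec z) (Nat.succ_pos k)
  rw [e]
  exact Submodule.sub_mem _ h0 (mulVec_mem_krylov h)

/-- The first half of the inductive step: from `D_{k+1} = K_k` and `r_{k+1} ⊥ K_k`, the O-ACCEL
subspace based at `p = x^P_{k+1}` is `K_{k+1}`. -/
lemma osub_eq_krylov {n : ℕ} {A : Matrix (Fin n) (Fin n) ℝ} {b p : Fin n → ℝ}
    {x : ℕ → Fin n → ℝ} {k : ℕ} {c : ℝ} (hc : 0 < c)
    (hp : p = x (k + 1) + c • (b - A.mulVec (x (k + 1))))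
    (hr : b - A.mulVec (x (k + 1)) ≠ 0)
    (hD : osub x (k + 1) (x 1) = krylov A (b - A.mulVec (x 1)) k)
    (ho : ∀ v ∈ krylov A (b - A.mulVec (x 1)) k, (b - A.mulVec (x (k + 1))) ⬝ᵥ v = 0) :
    osub x (k + 1) p = krylov A (b - A.mulVec (x 1)) (k + 1) := by
  have hmem : x (k + 1) - x 1 ∈ krylov A (b - A.mulVec (x 1)) k :=
    hD ▸ sub_mem_osub x (x 1) (by omega) le_rfl
  have e : x (k + 1) - p = (-c) • (b - A.mulVec (x (k + 1))) := by
    rw [hp, neg_smul]; abel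
  rw [osub_eq_sup x p (by omega), hD, krylov_succ]
  apply sup_span_singleton_eq
  · rw [← krylov_succ, e]
    exact Submodule.smul_mem _ _ (residual_mem_krylov hmem)
  · intro h
    have h0 := ho _ h
    rw [e, dotProduct_smul, smul_eq_mul] at h0
    exact hr (dotProduct_self_eq_zero.1 ((mul_eq_zero.1 h0).resolve_left (by linarith)))

/-- O-ACCEL with a steepest-descent preconditioner, always taking the accelerated
step, generates the FOM iterates for `A x = b`, and `O_k(x^P_k) = K_k`. -/
theorem stmt0 {n K : ℕ} (A : Matrix (Fin n) (Fin n) ℝ) (hA : A.PosDef)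
    (b : Fin n → ℝ) (x : ℕ → Fin n → ℝ) (xP : ℕ → Fin n → ℝ) (lam : ℕ → ℝ)
    (hlam : ∀ k, 1 ≤ k → k ≤ K → 0 < lam k)
    (hxP : ∀ k, 1 ≤ k → k ≤ K → xP k = x k + lam k • (b - A.mulVec (x k)))
    (hstep : ∀ k, 1 ≤ k → k ≤ K → x (k + 1) - xP k ∈ osub x k (xP k))
    (horth : ∀ k, 1 ≤ k → k ≤ K →
      ∀ v ∈ osub x k (xP k), (b - A.mulVec (x (k + 1))) ⬝ᵥ v = 0)
    (hres : ∀ k, 1 ≤ k → k ≤ K → b - A.mulVec (x k) ≠ 0) :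
    ∀ k, 1 ≤ k → k ≤ K →
      x (k + 1) - x 1 ∈ krylov A (b - A.mulVec (x 1)) k ∧
      (∀ v ∈ krylov A (b - A.mulVec (x 1)) k, (b - A.mulVec (x (k + 1))) ⬝ᵥ v = 0) ∧
      osub x k (xP k) = krylov A (b - A.mulVec (x 1)) k := by
  have inv : ∀ k, k ≤ K → osub x (k + 1) (x 1) = krylov A (b - A.mulVec (x 1)) k ∧
      ∀ v ∈ krylov A (b - A.mulVec (x 1)) k, (b - A.mulVec (x (k + 1))) ⬝ᵥ v = 0 := by
    intro k
    induction k with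
    | zero =>
      intro _
      rw [krylov_zero]
      refine ⟨eq_bot_iff.2 (osub_le fun j h1 hj => ?_), fun v hv => ?_⟩
      · obtain rfl : j = 1 := by omega
        simp
      · rw [(Submodule.mem_bot ℝ).1 hv, dotProduct_zero]
    | succ k ih =>
      intro hk
      obtain ⟨hD, ho⟩ := ih (by omega)
      have h1 : 1 ≤ k + 1 := by omega
      have hO := osub_eq_krylov (hlam _ h1 hk) (hxP _ h1 hk) (hres _ h1 hk) hD ho
      have ho' := horth _ h1 hk
      have hs := hstep _ h1 hk
      rw [hO] at ho' hs
      refine ⟨?_, ho'⟩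
      have hmem : x (k + 1) - x 1 ∈ krylov A (b - A.mulVec (x 1)) k :=
        hD ▸ sub_mem_osub x (x 1) (by omega) le_rfl
      have hle : krylov A (b - A.mulVec (x 1)) k ≤ krylov A (b - A.mulVec (x 1)) (k + 1) := by
        rw [krylov_succ]; exact le_sup_left
      have hnew : x (k + 1 + 1) - x 1 ∈ krylov A (b - A.mulVec (x 1)) (k + 1) := by
        have e : x (k + 1 + 1) - x 1 = (x (k + 1 + 1) - xP (k + 1)) - (x 1 - xP (k + 1)) := by
          abel
        rw [e]
        exact Submodule.sub_mem _ hs (hO ▸ sub_mem_osub x _ le_rfl h1)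
      rw [osub_succ, hD, krylov_succ]
      apply sup_span_singleton_eq
      · rwa [← krylov_succ]
      · intro hold
        -- no progress: the Galerkin points of stages `k` and `k + 1` coincide
        have heq : x (k + 1 + 1) = x (k + 1) := by
          refine eq_of_residual_orth hA ?_ (fun v hv => ho' v (hle hv)) ho
          have e : x (k + 1 + 1) - x (k + 1) = (x (k + 1 + 1) - x 1) - (x (k + 1) - x 1) := by
            abel
          rw [e]
          exact Submodule.sub_mem _ hold hmem
        rw [heq] at ho'
        exact hres _ h1 hk (dotProduct_self_eq_zero.1 (ho' _ (residual_mem_krylov hmem)))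
  intro k hk1 hk
  obtain ⟨hD, ho⟩ := inv k hk
  obtain ⟨m, rfl⟩ : ∃ m, k = m + 1 := ⟨k - 1, by omega⟩
  obtain ⟨hD', ho'⟩ := inv m (by omega)
  exact ⟨hD ▸ sub_mem_osub x (x 1) (by omega) le_rfl, ho,
    osub_eq_krylov (hlam _ hk1 hk) (hxP _ hk1 hk) (hres _ hk1 hk) hD' ho'⟩
end

section
/- Let A be an n×n real matrix, b ∈ ℝⁿ, and x⁽¹⁾, …, x⁽ᵏ⁾ ∈ ℝⁿ. Set r⁽¹⁾ = b − A x⁽¹⁾, let K_j denote the Krylov subspaces (with K₀ = {0}), and set r⁽ᵏ⁾ = b − A x⁽ᵏ⁾. Assume: (i) span{x⁽ᵏ⁾ − x⁽ᵏ⁻¹⁾, …, x⁽²⁾ − x⁽¹⁾} = K_{k−1}; (ii) r⁽ᵏ⁾ ⊥ K_{k−1}; (iii) r⁽ᵏ⁾ ≠ 0; and (iv) x^P = x⁽ᵏ⁾ + λ r⁽ᵏ⁾ for some λ ≠ 0. Then O_k(x^P) = span{x⁽¹⁾ − x^P, …, x⁽ᵏ⁾ − x^P} equals K_k, and the coset x^P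 + O_k(x^P) equals the coset x⁽¹⁾ + K_k. -/
/-!
Write `k = m + 1`, `r = b - A x⁽¹⁾` and `s = b - A x⁽ᵏ⁾`. Telescoping the increments
gives `x⁽ʲ⁾ - x⁽¹⁾ ∈ K_m` for `1 ≤ j ≤ k`, so `s = r - A (x⁽ᵏ⁾ - x⁽¹⁾) ∈ K_{m+1}`
(`krylov_self_mem`, `krylov_mulVec_mem`). A nonzero vector orthogonal to `K_m` is not in `K_m`,
and `K_{m+1}` is generated by `K_m` and the single vector `A^m r` (`krylov_succ_sup`), so by the
exchange property (`krylov_succ_le`) every subspace that contains `K_m` and `s` contains `K_{m+1}`.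

The subspace `O_k(x^P)` contains the increments, hence `K_m`, and also `x⁽ᵏ⁾ - x^P = -λ s`,
hence `s`; thus `K_{m+1} ≤ O_k(x^P)`. The reverse inclusion is
`x⁽ʲ⁾ - x^P = (x⁽ʲ⁾ - x⁽¹⁾) - (x⁽ᵏ⁾ - x⁽¹⁾) - λ s ∈ K_{m+1}`. The cosets agree because
`x^P - x⁽¹⁾ = (x⁽ᵏ⁾ - x⁽¹⁾) + λ s ∈ K_{m+1}`.
-/

open Matrix

theorem krylov_succ_sup {n : ℕ} (A : Matrix (Fin n) (Fin n) ℝ) (r : Fin n → ℝ) (m : ℕ) :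
    krylov A r (m + 1) = krylov A r m ⊔ Submodule.span ℝ {(A ^ m).mulVec r} := by
  unfold krylov
  rw [← Submodule.span_union]
  congr 1
  ext v
  simp [Fin.exists_fin_succ', eq_comm, or_comm]

theorem krylov_le_succ {n : ℕ} (A : Matrix (Fin n) (Fin n) ℝ) (r : Fin n → ℝ) (m : ℕ) :
    krylov A r m ≤ krylov A r (m + 1) := by
  rw [krylov_succ_sup]
  exact le_sup_left

theorem krylov_self_mem {n : ℕ} (A : Matrix (Fin n) (Fin n) ℝ) (r : Fin n → ℝ) (m : ℕ) :
    r ∈ krylov A r (m + 1) :=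
  Submodule.subset_span ⟨0, by simp⟩

theorem krylov_mulVec_mem {n : ℕ} (A : Matrix (Fin n) (Fin n) ℝ) (r : Fin n → ℝ) (m : ℕ)
    {v : Fin n → ℝ} (hv : v ∈ krylov A r m) : A.mulVec v ∈ krylov A r (m + 1) := by
  have h : krylov A r m ≤ (krylov A r (m + 1)).comap A.mulVecLin := by
    refine Submodule.span_le.2 ?_
    rintro _ ⟨i, rfl⟩
    exact Submodule.subset_span ⟨i.succ, by simp [pow_succ', Matrix.mulVec_mulVec]⟩
  exact h hv

/-- Exchange property: since `K_{m+1}` exceeds `K_m` by one generator, any vector of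
`K_{m+1}` outside `K_m` can replace that generator. -/
theorem krylov_succ_le {n : ℕ} (A : Matrix (Fin n) (Fin n) ℝ) (r : Fin n → ℝ) (m : ℕ)
    {s : Fin n → ℝ} (hs : s ∈ krylov A r (m + 1)) (hs' : s ∉ krylov A r m)
    {V : Submodule ℝ (Fin n → ℝ)} (hV : krylov A r m ≤ V) (hsV : s ∈ V) :
    krylov A r (m + 1) ≤ V := by
  rw [krylov_succ_sup] at hs ⊢
  obtain ⟨w, hw, z, hz, hwz⟩ := Submodule.mem_sup.1 hs
  obtain ⟨c, rfl⟩ := Submodule.mem_span_singleton.1 hz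
  have hc : c ≠ 0 := by
    rintro rfl
    apply hs'
    rw [← hwz]
    simpa using hw
  refine sup_le hV ((Submodule.span_singleton_le_iff_mem _ _).2 ?_)
  rw [← V.smul_mem_iff hc, ← V.add_mem_iff_right (hV hw), hwz]
  exact hsV

/-- Under the induction hypotheses at stage `k`, the O-ACCEL search subspace
`O_k(x^P)` equals the Krylov subspace `K_k`, and the affine search set
`x^P + O_k(x^P)` equals `x⁽¹⁾ + K_k`. -/
theorem stmt3 {n : ℕ} (A : Matrix (Fin n) (Fin n) ℝ) (b : Fin n → ℝ)
    (k : ℕ) (hk : 1 ≤ k) (x : ℕ → Fin n → ℝ) (xP : Fin n → ℝ) (lam : ℝ) (hlam : lam ≠ 0)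
    (hspan : Submodule.span ℝ {v | ∃ j, 1 ≤ j ∧ j + 1 ≤ k ∧ v = x (j + 1) - x j}
      = krylov A (b - A.mulVec (x 1)) (k - 1))
    (horth : ∀ v ∈ krylov A (b - A.mulVec (x 1)) (k - 1), (b - A.mulVec (x k)) ⬝ᵥ v = 0)
    (hrk : b - A.mulVec (x k) ≠ 0)
    (hxP : xP = x k + lam • (b - A.mulVec (x k))) :
    osub x k xP = krylov A (b - A.mulVec (x 1)) k ∧
    {y | ∃ u ∈ osub x k xP, y = xP + u}
      = {y | ∃ u ∈ krylov A (b - A.mulVec (x 1)) k, y = x 1 + u} := by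
  obtain ⟨m, rfl⟩ : ∃ m, k = m + 1 := ⟨k - 1, by omega⟩
  rw [Nat.add_sub_cancel] at hspan horth
  set r := b - A.mulVec (x 1) with hr
  set s := b - A.mulVec (x (m + 1)) with hs
  have htel : ∀ j, j + 1 ≤ m + 1 → x (j + 1) - x 1 ∈ krylov A r m := by
    intro j
    induction j with
    | zero => simp
    | succ j ih =>
      intro hj
      have h : x (j + 1 + 1) - x (j + 1) ∈ krylov A r m := by
        rw [← hspan]
        exact Submodule.subset_span ⟨j + 1, by omega, hj, rfl⟩
      simpa using add_mem h (ih (by omega))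
  have hsmem : s ∈ krylov A r (m + 1) := by
    have h := sub_mem (krylov_self_mem A r m) (krylov_mulVec_mem A r m (htel m le_rfl))
    rw [Matrix.mulVec_sub] at h
    convert h using 1
    rw [hs, hr]
    abel
  have hsnot : s ∉ krylov A r m := fun h => hrk (dotProduct_self_eq_zero.1 (horth s h))
  have hP : xP - x 1 ∈ krylov A r (m + 1) := by
    rw [hxP, add_sub_right_comm]
    exact add_mem (krylov_le_succ A r m (htel m le_rfl)) (Submodule.smul_mem _ _ hsmem)
  have hO : osub x (m + 1) xP = krylov A r (m + 1) := by
    have hmem : ∀ j, 1 ≤ j → j ≤ m + 1 → x j - xP ∈ osub x (m + 1) xP :=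
      fun j h1 h2 => Submodule.subset_span ⟨j, h1, h2, rfl⟩
    apply le_antisymm
    · refine Submodule.span_le.2 ?_
      rintro _ ⟨j, h1, h2, rfl⟩
      obtain ⟨i, rfl⟩ : ∃ i, j = i + 1 := ⟨j - 1, by omega⟩
      simpa using sub_mem (krylov_le_succ A r m (htel i h2)) hP
    · refine krylov_succ_le A r m hsmem hsnot ?_ ?_
      · rw [← hspan]
        refine Submodule.span_le.2 ?_
        rintro _ ⟨j, h1, h2, rfl⟩
        simpa using sub_mem (hmem (j + 1) (by omega) h2) (hmem j h1 (by omega))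
      · rw [← Submodule.smul_mem_iff _ hlam, ← neg_mem_iff]
        simpa [hxP] using hmem (m + 1) hk le_rfl
  refine ⟨hO, ?_⟩
  rw [hO]
  ext y
  constructor
  · rintro ⟨u, hu, rfl⟩
    exact ⟨(xP - x 1) + u, add_mem hP hu, by abel⟩
  · rintro ⟨u, hu, rfl⟩
    exact ⟨u - (xP - x 1), sub_mem hu hP, by abel⟩
end
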